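/- Reduction of the constrained primal problem to the complementary energy and attainment: under the admissible stiffness family assumptions, inf over all (u,t) ∈ ℝⁿ × B satisfying H(t)u = f of (1/2)⟨f, u⟩ equals inf_{t ∈ B} (1/2)⟨f, H(t)⁻¹ f⟩, and this infimum is attained at some t₀ ∈ B (with corresponding u₀ = H(t₀)⁻¹ f). -/

import Mathlib

/-!
Coercivity makes every `H t` with `t ∈ B` injective, hence invertible, so the state equation
`H(t)u = f` has the unique solution `u = H(t)⁻¹ f` and both infima run over the same set of values.
By Cramer's rule the complementary energy is continuous in `t` on the compact set `B`, so the
extreme value theorem provides a minimiser.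
-/

open Matrix

lemma isUnit_det_of_coercive {n : ℕ} {c : ℝ} (hc : 0 < c) {A : Matrix (Fin n) (Fin n) ℝ}
    (hA : ∀ u : Fin n → ℝ, c * (u ⬝ᵥ u) ≤ A.mulVec u ⬝ᵥ u) : IsUnit A.det := by
  rw [← Matrix.isUnit_iff_isUnit_det, ← Matrix.mulVec_injective_iff_isUnit]
  intro u v huv
  have h0 : A.mulVec (u - v) = 0 := by rw [Matrix.mulVec_sub, sub_eq_zero]; exact huv
  have h1 := hA (u - v)
  rw [h0, zero_dotProduct] at h1
  have h2 : (u - v) ⬝ᵥ (u - v) = 0 :=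
    le_antisymm (nonpos_of_mul_nonpos_right h1 hc)
      (Finset.sum_nonneg fun i _ => mul_self_nonneg _)
  exact sub_eq_zero.mp (dotProduct_self_eq_zero.mp h2)

lemma continuousOn_energy {X : Type*} [TopologicalSpace X] {n : ℕ} {B : Set X}
    {H : X → Matrix (Fin n) (Fin n) ℝ} (hH : Continuous H)
    (hdet : ∀ t ∈ B, IsUnit (H t).det) (f : Fin n → ℝ) :
    ContinuousOn (fun t => (1 / 2) * (f ⬝ᵥ (H t)⁻¹.mulVec f)) B := by
  have hinv : ContinuousOn (fun t => (H t)⁻¹) B := by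
    simp only [Matrix.inv_def, Ring.inverse_eq_inv']
    exact (hH.matrix_det.continuousOn.inv₀ fun t ht => (hdet t ht).ne_zero).smul
      hH.matrix_adjugate.continuousOn
  have hg : Continuous fun A : Matrix (Fin n) (Fin n) ℝ => (1 / 2) * (f ⬝ᵥ A.mulVec f) :=
    continuous_const.mul (continuous_const.dotProduct (continuous_id.matrix_mulVec continuous_const))
  exact hg.comp_continuousOn hinv

/-- **Reduction of the constrained primal problem to the complementary energy
and attainment.**  Under the admissible stiffness family assumptions,
`inf {(1/2)⟨f,u⟩ : (u,t) ∈ ℝⁿ × B, H(t)u = f} = inf_{t∈B} (1/2)⟨f, H(t)⁻¹f⟩`,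
attained at some `t₀ ∈ B` with `u₀ = H(t₀)⁻¹f`. -/
theorem stmt_9 (N n : ℕ) (hN : 0 < N) (hn : 0 < n)
    (B : Set (Fin N → ℝ)) (hBne : B.Nonempty) (hBcomp : IsCompact B)
    (hBconv : Convex ℝ B)
    (H : (Fin N → ℝ) →ᵃ[ℝ] Matrix (Fin n) (Fin n) ℝ)
    (hsym : ∀ t ∈ B, (H t).IsSymm)
    (c : ℝ) (hc : 0 < c)
    (hcoer : ∀ t ∈ B, ∀ u : Fin n → ℝ, c * (u ⬝ᵥ u) ≤ (H t).mulVec u ⬝ᵥ u)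
    (f : Fin n → ℝ) :
    sInf {x : ℝ | ∃ u t, t ∈ B ∧ (H t).mulVec u = f ∧ x = (1 / 2) * (f ⬝ᵥ u)}
        = sInf ((fun t => (1 / 2) * (f ⬝ᵥ (H t)⁻¹.mulVec f)) '' B) ∧
    ∃ t₀ ∈ B,
      (1 / 2) * (f ⬝ᵥ (H t₀)⁻¹.mulVec f)
          = sInf ((fun t => (1 / 2) * (f ⬝ᵥ (H t)⁻¹.mulVec f)) '' B) ∧
      (H t₀).mulVec ((H t₀)⁻¹.mulVec f) = f := by
  have hdet : ∀ t ∈ B, IsUnit (H t).det := fun t ht => isUnit_det_of_coercive hc (hcoer t ht)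
  have hsol : ∀ t ∈ B, (H t).mulVec ((H t)⁻¹.mulVec f) = f := fun t ht => by
    rw [Matrix.mulVec_mulVec, Matrix.mul_nonsing_inv _ (hdet t ht), Matrix.one_mulVec]
  refine ⟨?_, ?_⟩
  · congr 1
    ext x
    constructor
    · rintro ⟨u, t, ht, hu, rfl⟩
      refine ⟨t, ht, ?_⟩
      have : (H t)⁻¹.mulVec f = u := by
        rw [← hu, Matrix.mulVec_mulVec, Matrix.nonsing_inv_mul _ (hdet t ht), Matrix.one_mulVec]
      simp only [this]
    · rintro ⟨t, ht, rfl⟩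
      exact ⟨_, t, ht, hsol t ht, rfl⟩
  · have hH : Continuous H := by
      rw [AffineMap.decomp H]
      exact (LinearMap.continuous_of_finiteDimensional H.linear).add continuous_const
    obtain ⟨t₀, ht₀, hmin⟩ :=
      hBcomp.exists_sInf_image_eq hBne (continuousOn_energy hH hdet f)
    exact ⟨t₀, ht₀, hmin.symm, hsol t₀ ht₀⟩
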